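/- Let s ≥ 1 be an integer, q₀ = 2^s and q = 2q₀². Define φ : {0,…,q²−q} → ℕ as follows. For 0 ≤ i ≤ q(q−2)/2, write i = lq + kq₀ + j with 0 ≤ j ≤ q₀−1, 0 ≤ k ≤ 2q₀−1, l ≥ 0, and set φ(i) = l if j = 0 and k = 0; φ(i) = l + 1 + max{q − q₀(k+2l+2), 0} if j = 0 and k ≠ 0; φ(i) = l + 1 + max{q − q₀(⌈k/2⌉+j+l+1), 0} if j ≠ 0. For q(q−2)/2 + 1 ≤ i ≤ q²−q, write q² − q − i = lq + kq₀ + j with 0 ≤ j ≤ q₀−1, 0 ≤ k ≤ 2q₀−1, l ≥ 0, and set φ(i) = q − l − 1 − max{q − q₀(k+2l+1), 0} if j = q₀−1; φ(i) = q − l − 1 − max{q − q₀(⌈k/2⌉+j+l+1), 0} if j ≠ q₀−1. Then the sum of φ(i) over all integers i with 0 ≤ i ≤ q² − q equals q(q−1)²/2. -/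

import Mathlib

/-!
Write `n = q₀` and pair the value prescribed at `d = lq + kn + j` with the one prescribed at
`q² - q - d`. For `j ≠ 0, n - 1` the two maxima are equal and the pair sums to `q`. The other
deviations from `q` are multiples of `max{2n - x, 0}` for various `x`: those coming from the
special rules `j = 0` and `j = n - 1` telescope in `k`, and those left at the ends of the generic
rule differ by a shift of `l` by `n - 1`, so summing over `l` gives differences of triangular
numbers. The pairing runs over `0 ≤ l < n²`; on the row `l = n² - 1` only `d = (n² - 1)q` lies in
the lower half, so the rest of that row, where every maximum vanishes, is subtracted again.
-/

open Finset

lemma pos_of_lt_pow {a n m : ℕ} (hm : m ≠ 0) (h : a < n ^ m) : 0 < n :=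
  (pow_pos_iff hm).1 (Nat.zero_lt_of_lt h)

lemma sum_range_mul {M : Type*} [AddCommMonoid M] (f : ℕ → M) (a b : ℕ) :
    ∑ i ∈ range (a * b), f i = ∑ x ∈ range a, ∑ y ∈ range b, f (x * b + y) := by
  induction a with
  | zero => simp
  | succ a ih => rw [Nat.succ_mul, sum_range_add, ih, sum_range_succ]

lemma sum_range_mul_two_mul_sq {M : Type*} [AddCommMonoid M] (f : ℕ → M) (a n : ℕ) :
    ∑ i ∈ range (a * (2 * n ^ 2)), f i =
      ∑ l ∈ range a, ∑ k ∈ range (2 * n), ∑ j ∈ range n, f (l * (2 * n ^ 2) + k * n + j) := by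
  rw [sum_range_mul]
  refine sum_congr rfl fun l _ => ?_
  rw [show 2 * n ^ 2 = 2 * n * n by ring, sum_range_mul]
  simp only [add_assoc]

lemma sum_range_add_add_one_reflect {M : Type*} [AddCommMonoid M] (f : ℕ → M) (a b : ℕ) :
    ∑ i ∈ range (a + b + 1), f i =
      ∑ i ∈ range a, f i + f a + ∑ d ∈ range b, f (a + b - d) := by
  rw [show a + b + 1 = a + 1 + b by ring, sum_range_add, sum_range_succ,
    ← sum_range_reflect (fun i => f (a + 1 + i))]
  congr 1
  refine sum_congr rfl fun d hd => congrArg f ?_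
  have := mem_range.1 hd
  omega

lemma sum_range_ite_first_sub_ite_last {M : Type*} [AddCommGroup M] (f : ℕ → M) (a b : M)
    {n : ℕ} (hn : 0 < n) :
    ∑ j ∈ range n, ((if j = 0 then a else f j) - (if j = n - 1 then b else f j)) =
      a - b + (f (n - 1) - f 0) := by
  obtain ⟨m, rfl⟩ := Nat.exists_eq_add_one.2 hn
  have hfirst : ∑ j ∈ range (m + 1), (if j = 0 then a else f j) =
      ∑ j ∈ range m, f (j + 1) + a := by
    simp [sum_range_succ']
  have hlast : ∑ j ∈ range (m + 1), (if j = m then b else f j) = ∑ j ∈ range m, f j + b := by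
    rw [sum_range_succ, if_pos rfl]
    congr 1
    exact sum_congr rfl fun j hj => if_neg (mem_range.1 hj).ne
  rw [sum_sub_distrib, Nat.add_sub_cancel, hfirst, hlast, ← sum_range_sub f m, sum_sub_distrib]
  abel

lemma sum_range_two_mul_ceil_half (n : ℕ) : ∑ k ∈ range (2 * n), (k + 1) / 2 = n ^ 2 := by
  induction n with
  | zero => simp
  | succ n ih =>
    rw [Nat.mul_succ, sum_range_succ, sum_range_succ, ih,
      show (2 * n + 1) / 2 = n by omega, show (2 * n + 1 + 1) / 2 = n + 1 by omega]
    ring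

lemma two_mul_sum_range_sub_succ {a N : ℕ} (h : a ≤ N + 1) :
    2 * ∑ i ∈ range N, ((a - (i + 1) : ℕ) : ℤ) = a * (a - 1) := by
  induction N generalizing a with
  | zero => interval_cases a <;> simp
  | succ N ih =>
    cases a with
    | zero => simp
    | succ b =>
      simp only [sum_range_succ', Nat.add_sub_add_right, Nat.sub_zero]
      rw [mul_add, ih (by omega)]
      push_cast
      ring

/-- The truncated difference `max{2n - x, 0}`. For `q = 2n²` every maximum in the definition of
`φ` is `max{q - nx, 0} = n * gap n x` for some `x`. -/
def gap (n x : ℕ) : ℤ := (2 * n - x : ℕ)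

lemma natCast_two_mul_sq_sub_mul (n x : ℕ) : ((2 * n ^ 2 - n * x : ℕ) : ℤ) = n * gap n x := by
  rw [gap, ← Nat.cast_mul, Nat.mul_sub, show n * (2 * n) = 2 * n ^ 2 by ring]

lemma gap_eq_zero {n x : ℕ} (h : 2 * n ≤ x) : gap n x = 0 := by
  rw [gap, Nat.sub_eq_zero_of_le h, Nat.cast_zero]

lemma two_mul_sum_range_gap {n c N : ℕ} (hc : c ≤ 2 * n) (hN : 2 * n ≤ c + N + 1) :
    2 * ∑ l ∈ range N, gap n (c + l + 1) = (2 * n - c) * (2 * n - c - 1) := by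
  have h := two_mul_sum_range_sub_succ (a := 2 * n - c) (N := N) (by omega)
  push_cast [Nat.cast_sub hc] at h
  simpa only [gap, add_assoc, Nat.sub_add_eq] using h

/-- The value `φ(i)` prescribed on the lower half of the range for `i = lq + kn + j`, where
`q = 2n²`. -/
def lowValue (n l k j : ℕ) : ℕ :=
  if j = 0 ∧ k = 0 then l
  else if j = 0 then l + 1 + (2 * n ^ 2 - n * (k + 2 * l + 2))
  else l + 1 + (2 * n ^ 2 - n * ((k + 1) / 2 + j + l + 1))

/-- The value `φ(i)` prescribed on the upper half of the range for `q² - q - i = lq + kn + j`,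
where `q = 2n²`. -/
def highValue (n l k j : ℕ) : ℕ :=
  if j = n - 1 then 2 * n ^ 2 - l - 1 - (2 * n ^ 2 - n * (k + 2 * l + 1))
  else 2 * n ^ 2 - l - 1 - (2 * n ^ 2 - n * ((k + 1) / 2 + j + l + 1))

lemma natCast_lowValue (n l k j : ℕ) :
    (lowValue n l k j : ℤ) =
      l + 1 + n * (if j = 0 then gap n (k + 2 * l + 2) else gap n ((k + 1) / 2 + j + l + 1)) -
        if j = 0 then if k = 0 then 1 + n * gap n (2 * l + 2) else 0 else 0 := by
  by_cases hj : j = 0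
  · by_cases hk : k = 0
    · simp [lowValue, hj, hk]
    · simp [lowValue, hj, hk, ← natCast_two_mul_sq_sub_mul]
  · simp [lowValue, hj, ← natCast_two_mul_sq_sub_mul]

lemma natCast_two_mul_sq_sub_sub {n l x : ℕ} (hl : l < n ^ 2) (hx : l < x) :
    ((2 * n ^ 2 - l - 1 - (2 * n ^ 2 - n * x) : ℕ) : ℤ) = 2 * n ^ 2 - (l + 1) - n * gap n x := by
  have hn : 0 < n := pos_of_lt_pow two_ne_zero hl
  have hxn : x ≤ n * x := Nat.le_mul_of_pos_left x hn
  rw [← natCast_two_mul_sq_sub_mul]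
  push_cast [show 2 * n ^ 2 - n * x ≤ 2 * n ^ 2 - l - 1 by omega, show l ≤ 2 * n ^ 2 by omega,
    show 1 ≤ 2 * n ^ 2 - l by omega]
  ring

lemma natCast_highValue {n l : ℕ} (hl : l < n ^ 2) (k j : ℕ) :
    (highValue n l k j : ℤ) =
      2 * n ^ 2 - (l + 1) -
        n * if j = n - 1 then gap n (k + 2 * l + 1) else gap n ((k + 1) / 2 + j + l + 1) := by
  unfold highValue
  split_ifs <;> exact natCast_two_mul_sq_sub_sub hl (by omega)

lemma sum_lowValue_add_highValue_cell {n l : ℕ} (hl : l < n ^ 2) (k : ℕ) :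
    ∑ j ∈ range n, ((lowValue n l k j : ℤ) + highValue n l k j) =
      2 * n ^ 3 + n * (gap n (k + 1 + 2 * l + 1) - gap n (k + 2 * l + 1)) +
        n * (gap n ((k + 1) / 2 + (n - 1) + l + 1) - gap n ((k + 1) / 2 + l + 1)) -
        if k = 0 then 1 + n * gap n (2 * l + 2) else 0 := by
  have hn : 0 < n := pos_of_lt_pow two_ne_zero hl
  have hcell (j : ℕ) : (lowValue n l k j : ℤ) + highValue n l k j =
      2 * n ^ 2 +
        n * ((if j = 0 then gap n (k + 2 * l + 2) else gap n ((k + 1) / 2 + j + l + 1)) -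
          (if j = n - 1 then gap n (k + 2 * l + 1) else gap n ((k + 1) / 2 + j + l + 1))) -
        if j = 0 then if k = 0 then 1 + n * gap n (2 * l + 2) else 0 else 0 := by
    rw [natCast_lowValue, natCast_highValue hl]
    ring
  simp only [hcell]
  rw [sum_sub_distrib, sum_add_distrib, sum_const, card_range, nsmul_eq_mul, ← mul_sum,
    sum_range_ite_first_sub_ite_last (fun j => gap n ((k + 1) / 2 + j + l + 1)) _ _ hn,
    sum_ite_eq', if_pos (mem_range.2 hn), add_zero,
    show k + 1 + 2 * l + 1 = k + 2 * l + 2 by ring]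
  ring

lemma sum_lowValue_add_highValue_row {n l : ℕ} (hl : l < n ^ 2) :
    ∑ k ∈ range (2 * n), ∑ j ∈ range n, ((lowValue n l k j : ℤ) + highValue n l k j) =
      4 * n ^ 4 - 1 - n * (gap n (2 * l + 1) + gap n (2 * l + 2)) +
        n * ∑ k ∈ range (2 * n),
          (gap n ((k + 1) / 2 + (n - 1) + l + 1) - gap n ((k + 1) / 2 + l + 1)) := by
  have hn : 0 < n := pos_of_lt_pow two_ne_zero hl
  have htelescope : ∑ k ∈ range (2 * n), (gap n (k + 1 + 2 * l + 1) - gap n (k + 2 * l + 1)) =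
      -gap n (2 * l + 1) := by
    rw [sum_range_sub (fun k => gap n (k + 2 * l + 1)), gap_eq_zero (by omega), zero_add, zero_sub]
  simp only [sum_lowValue_add_highValue_cell hl]
  rw [sum_sub_distrib, sum_add_distrib, sum_add_distrib, sum_const, card_range, nsmul_eq_mul,
    ← mul_sum, ← mul_sum, htelescope, sum_ite_eq', if_pos (mem_range.2 (by omega))]
  push_cast
  ring

lemma sum_gap_odd_add_gap_even (n : ℕ) :
    ∑ l ∈ range (n ^ 2), (gap n (2 * l + 1) + gap n (2 * l + 2)) = n * (2 * n - 1) := by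
  have hpair : ∑ l ∈ range (n ^ 2), (gap n (2 * l + 1) + gap n (2 * l + 2)) =
      ∑ i ∈ range (n ^ 2 * 2), gap n (0 + i + 1) := by
    simp [sum_range_mul, sum_range_succ, mul_comm 2]
  have h := two_mul_sum_range_gap (n := n) (c := 0) (N := n ^ 2 * 2) (by omega) (by nlinarith)
  rw [hpair]
  push_cast at h
  linarith

lemma two_mul_sum_gap_shift_sub_gap {n c : ℕ} (hn : 0 < n) (hc : c ≤ n) :
    2 * ∑ l ∈ range (n ^ 2), (gap n (c + (n - 1) + l + 1) - gap n (c + l + 1)) =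
      (n - 1) * (2 * c - 3 * n) := by
  have hsq : 2 * n ≤ n ^ 2 + 1 := by nlinarith [two_mul_le_add_sq n 1]
  have hshift := two_mul_sum_range_gap (n := n) (c := c + (n - 1)) (N := n ^ 2)
    (by omega) (by omega)
  have hbase := two_mul_sum_range_gap (n := n) (c := c) (N := n ^ 2) (by omega) (by omega)
  rw [sum_sub_distrib, mul_sub, hshift, hbase]
  push_cast [Nat.cast_sub (show 1 ≤ n from hn)]
  ring

lemma sum_gap_shift_sub_gap {n : ℕ} (hn : 0 < n) :
    ∑ l ∈ range (n ^ 2), ∑ k ∈ range (2 * n),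
      (gap n ((k + 1) / 2 + (n - 1) + l + 1) - gap n ((k + 1) / 2 + l + 1)) =
      -(2 * n ^ 2 * (n - 1)) := by
  have hceil : ∑ k ∈ range (2 * n), (((k + 1) / 2 : ℕ) : ℤ) = n ^ 2 := by
    exact_mod_cast sum_range_two_mul_ceil_half n
  refine mul_left_cancel₀ (two_ne_zero (α := ℤ)) ?_
  rw [sum_comm, mul_sum]
  calc ∑ k ∈ range (2 * n), 2 * ∑ l ∈ range (n ^ 2),
        (gap n ((k + 1) / 2 + (n - 1) + l + 1) - gap n ((k + 1) / 2 + l + 1))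
      = ∑ k ∈ range (2 * n), ((n : ℤ) - 1) * (2 * ((k + 1) / 2 : ℕ) - 3 * n) :=
        sum_congr rfl fun k hk =>
          two_mul_sum_gap_shift_sub_gap hn (by have := mem_range.1 hk; omega)
    _ = 2 * -(2 * n ^ 2 * (n - 1)) := by
        rw [← mul_sum, sum_sub_distrib, ← mul_sum, hceil, sum_const, card_range, nsmul_eq_mul]
        push_cast
        ring

lemma sum_lowValue_add_highValue {n : ℕ} (hn : 0 < n) :
    ∑ l ∈ range (n ^ 2), ∑ k ∈ range (2 * n), ∑ j ∈ range n,
      ((lowValue n l k j : ℤ) + highValue n l k j) = 4 * n ^ 6 - 2 * n ^ 4 := by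
  rw [sum_congr rfl fun l hl => sum_lowValue_add_highValue_row (mem_range.1 hl), sum_add_distrib,
    sum_sub_distrib, ← mul_sum, ← mul_sum, sum_gap_odd_add_gap_even, sum_gap_shift_sub_gap hn,
    sum_const, card_range, nsmul_eq_mul]
  push_cast
  ring

lemma natCast_lowValue_of_succ_eq_sq {n p : ℕ} (hp : n ^ 2 = p + 1) (k j : ℕ) :
    (lowValue n p k j : ℤ) = n ^ 2 - if j = 0 then if k = 0 then 1 else 0 else 0 := by
  have hsq : 2 * n ≤ p + 2 := by nlinarith [two_mul_le_add_sq n 1]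
  have hsq' : n ≤ p + 1 := by nlinarith
  have hp' : (n : ℤ) ^ 2 = p + 1 := by exact_mod_cast hp
  rw [natCast_lowValue, gap_eq_zero (x := k + 2 * p + 2) (by omega),
    gap_eq_zero (x := 2 * p + 2) (by omega), hp']
  split_ifs with hj
  · simp
  · simp
  · rw [gap_eq_zero (by omega), mul_zero, add_zero]

lemma sum_lowValue_of_succ_eq_sq {n p : ℕ} (hp : n ^ 2 = p + 1) :
    ∑ k ∈ range (2 * n), ∑ j ∈ range n, (lowValue n p k j : ℤ) = 2 * n ^ 4 - 1 := by
  have hn : 0 < n := pos_of_lt_pow two_ne_zero (show p < n ^ 2 by omega)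
  simp only [natCast_lowValue_of_succ_eq_sq hp, sum_sub_distrib, sum_const, card_range,
    nsmul_eq_mul, sum_ite_eq', mem_range, hn, if_true, Nat.mul_pos two_pos hn]
  push_cast
  ring

lemma sum_range_eq_of_digit_values {n p : ℕ} (hp : n ^ 2 = p + 1) (f : ℕ → ℕ)
    (hlow : ∀ l < p, ∀ k < 2 * n, ∀ j < n, f (l * (2 * n ^ 2) + k * n + j) = lowValue n l k j)
    (hmid : f (p * (2 * n ^ 2)) = p)
    (hhigh : ∀ l < n ^ 2, ∀ k < 2 * n, ∀ j < n,
      f (p * (2 * n ^ 2) + n ^ 2 * (2 * n ^ 2) - (l * (2 * n ^ 2) + k * n + j)) =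
        highValue n l k j) :
    ∑ i ∈ range (p * (2 * n ^ 2) + n ^ 2 * (2 * n ^ 2) + 1), f i = n ^ 2 * (2 * n ^ 2 - 1) ^ 2 := by
  have hn : 0 < n := pos_of_lt_pow two_ne_zero (show p < n ^ 2 by omega)
  have hp' : (n : ℤ) ^ 2 = p + 1 := by exact_mod_cast hp
  have hsplit : ∑ i ∈ range (p * (2 * n ^ 2) + n ^ 2 * (2 * n ^ 2) + 1), f i =
      ∑ l ∈ range p, ∑ k ∈ range (2 * n), ∑ j ∈ range n, lowValue n l k j + p +
        ∑ l ∈ range (n ^ 2), ∑ k ∈ range (2 * n), ∑ j ∈ range n, highValue n l k j := by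
    rw [sum_range_add_add_one_reflect, sum_range_mul_two_mul_sq, sum_range_mul_two_mul_sq, hmid]
    refine congrArg₂ (· + ·) (congrArg (· + p) ?_) ?_
    · exact sum_congr rfl fun l hl => sum_congr rfl fun k hk => sum_congr rfl fun j hj =>
        hlow l (mem_range.1 hl) k (mem_range.1 hk) j (mem_range.1 hj)
    · exact sum_congr rfl fun l hl => sum_congr rfl fun k hk => sum_congr rfl fun j hj =>
        hhigh l (mem_range.1 hl) k (mem_range.1 hk) j (mem_range.1 hj)
  have hbox := sum_lowValue_add_highValue hn
  simp only [sum_add_distrib] at hbox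
  rw [hp, sum_range_succ, sum_lowValue_of_succ_eq_sq hp, ← hp] at hbox
  rw [hsplit]
  zify [show 1 ≤ 2 * n ^ 2 by omega]
  linear_combination hbox - hp'

theorem stmt_9_general (q₀ q : ℕ) (hq₀ : 0 < q₀) (hq : q = 2 * q₀ ^ 2)
    (φ : ℕ → ℕ)
    (hφlow : ∀ i l k j : ℕ, i ≤ q * (q - 2) / 2 → i = l * q + k * q₀ + j →
      j + 1 ≤ q₀ → k + 1 ≤ 2 * q₀ →
      φ i = if j = 0 ∧ k = 0 then l
            else if j = 0 then l + 1 + (q - q₀ * (k + 2 * l + 2))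
            else l + 1 + (q - q₀ * ((k + 1) / 2 + j + l + 1)))
    (hφhigh : ∀ i l k j : ℕ, q * (q - 2) / 2 + 1 ≤ i → i ≤ q ^ 2 - q →
      q ^ 2 - q - i = l * q + k * q₀ + j →
      j + 1 ≤ q₀ → k + 1 ≤ 2 * q₀ →
      φ i = if j = q₀ - 1 then q - l - 1 - (q - q₀ * (k + 2 * l + 1))
            else q - l - 1 - (q - q₀ * ((k + 1) / 2 + j + l + 1))) :
    ∑ i ∈ Finset.range (q ^ 2 - q + 1), φ i = q * (q - 1) ^ 2 / 2 := by
  obtain ⟨p, hp⟩ : ∃ p, q₀ ^ 2 = p + 1 := Nat.exists_eq_add_one.2 (by positivity)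
  have hhalf : q * (q - 2) / 2 = p * q := by
    rw [show q - 2 = p * 2 by omega, ← mul_assoc, Nat.mul_div_cancel _ two_pos, mul_comm]
  have htop : q ^ 2 - q = p * q + q₀ ^ 2 * q := by
    rw [Nat.sub_eq_iff_eq_add (by nlinarith)]
    nlinarith
  have hresult : q * (q - 1) ^ 2 / 2 = q₀ ^ 2 * (q - 1) ^ 2 := by
    rw [hq, mul_assoc, Nat.mul_div_cancel_left _ two_pos]
  have hdigits {l k j : ℕ} (b : ℕ) (hl : l < b) (hk : k < 2 * q₀) (hj : j < q₀) :
      l * q + k * q₀ + j < b * q := by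
    nlinarith
  rw [hhalf] at hφlow hφhigh
  rw [htop] at hφhigh ⊢
  rw [hresult]
  subst hq
  refine sum_range_eq_of_digit_values hp φ (fun l hl k hk j hj => ?_) ?_
    fun l hl k hk j hj => ?_
  · exact hφlow _ l k j (hdigits p hl hk hj).le rfl hj hk
  · simpa using hφlow _ p 0 0 le_rfl (by ring) hq₀ (by omega)
  · have hd := hdigits _ hl hk hj
    exact hφhigh _ l k j (by omega) (Nat.sub_le _ _) (Nat.sub_sub_self (by omega)) hj hk

/-- The sum of `φ(i)` over all `0 ≤ i ≤ q² − q` equals `q(q−1)²/2`.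
The function `φ` is characterized via the unique decomposition
`n = lq + kq₀ + j` with `0 ≤ j ≤ q₀−1`, `0 ≤ k ≤ 2q₀−1`, `l ≥ 0`:
for `0 ≤ i ≤ q(q−2)/2` one decomposes `i` itself, and for
`q(q−2)/2 + 1 ≤ i ≤ q² − q` one decomposes `q² − q − i`.
Here `max{x − y, 0}` for naturals is truncated subtraction `x - y`, and
`⌈k/2⌉ = (k+1)/2`. -/
theorem stmt_9 (s : ℕ) (hs : 1 ≤ s) (q₀ q : ℕ)
    (hq₀ : q₀ = 2 ^ s) (hq : q = 2 * q₀ ^ 2)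
    (φ : ℕ → ℕ)
    (hφlow : ∀ i l k j : ℕ, i ≤ q * (q - 2) / 2 → i = l * q + k * q₀ + j →
      j + 1 ≤ q₀ → k + 1 ≤ 2 * q₀ →
      φ i = if j = 0 ∧ k = 0 then l
            else if j = 0 then l + 1 + (q - q₀ * (k + 2 * l + 2))
            else l + 1 + (q - q₀ * ((k + 1) / 2 + j + l + 1)))
    (hφhigh : ∀ i l k j : ℕ, q * (q - 2) / 2 + 1 ≤ i → i ≤ q ^ 2 - q →
      q ^ 2 - q - i = l * q + k * q₀ + j →
      j + 1 ≤ q₀ → k + 1 ≤ 2 * q₀ →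
      φ i = if j = q₀ - 1 then q - l - 1 - (q - q₀ * (k + 2 * l + 1))
            else q - l - 1 - (q - q₀ * ((k + 1) / 2 + j + l + 1))) :
    ∑ i ∈ Finset.range (q ^ 2 - q + 1), φ i = q * (q - 1) ^ 2 / 2 := by
  exact stmt_9_general q₀ q (hq₀ ▸ Nat.two_pow_pos s) hq φ hφlow hφhigh
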